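/- arXiv:2102.04014 — 2 statements merged into one kernel-verified Lean document; each statement's English description precedes it below -/
import Mathlib

section
/- Let n ≥ 1 and let P, Q : Fin n → E be two point clouds of equal size |P| = |Q| = n in a Euclidean space E. Suppose all points of P and Q lie in a convex set of diameter at most K, i.e. ‖u − v‖ ≤ K for all points u, v drawn from the ranges of P and Q. Then d_CD(P, Q) ≤ 2 K · d_EMD(P, Q). -/
open scoped BigOperators

/-- Chamfer discrepancy between two point clouds. -/
noncomputable def dCD {E : Type*} [NormedAddCommGroup E] {n m : ℕ}
    (P : Fin n → E) (Q : Fin m → E) : ℝ :=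
  (1 / (n : ℝ)) * ∑ i, ⨅ j, ‖P i - Q j‖ ^ 2 +
  (1 / (m : ℝ)) * ∑ j, ⨅ i, ‖P i - Q j‖ ^ 2

/-- Earth Mover's distance between two equal-size point clouds. -/
noncomputable def dEMD {E : Type*} [NormedAddCommGroup E] {n : ℕ}
    (P Q : Fin n → E) : ℝ :=
  ⨅ σ : Equiv.Perm (Fin n), ∑ i, ‖P i - Q (σ i)‖

/-!
The nearest neighbour of a point is at most as far away as its partner under an optimal matching,
and one factor of the squared distance to that partner is at most `K`. Hence either sum of
nearest-neighbour squares is at most `K` times the Earth Mover's distance, and the averaging in the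
Chamfer discrepancy even gains a factor `1 / n`.
-/

theorem sum_iInf_sq_le_mul_sum {ι κ : Type*} [Fintype ι] {c : ι → κ → ℝ} {f : ι → κ} {K : ℝ}
    (hc : ∀ i, 0 ≤ c i (f i)) (hK : ∀ i, c i (f i) ≤ K) :
    ∑ i, ⨅ j, c i j ^ 2 ≤ K * ∑ i, c i (f i) := by
  rw [Finset.mul_sum]
  refine Finset.sum_le_sum fun i _ => ?_
  have bddBelow_sq : BddBelow (Set.range fun j => c i j ^ 2) :=
    ⟨0, Set.forall_mem_range.2 fun j => sq_nonneg (c i j)⟩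
  calc ⨅ j, c i j ^ 2 ≤ c i (f i) ^ 2 := ciInf_le bddBelow_sq (f i)
    _ = c i (f i) * c i (f i) := sq _
    _ ≤ K * c i (f i) := mul_le_mul_of_nonneg_right (hK i) (hc i)

section PointClouds

variable {E : Type*} [NormedAddCommGroup E] {n m : ℕ}

/- The body of `⨅ j` in the first summand of `dCD` extends over the `+`, so that the second summand
is inside the infimum and inside the sum over `i`. Being constant there, it can be pulled out. -/
theorem dCD_eq_add [NeZero n] [NeZero m] (P : Fin n → E) (Q : Fin m → E) :
    dCD P Q = 1 / n * ∑ i, (⨅ j, ‖P i - Q j‖ ^ 2) + 1 / m * ∑ j, (⨅ i, ‖P i - Q j‖ ^ 2) := by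
  unfold dCD
  generalize 1 / (m : ℝ) * ∑ j, (⨅ i, ‖P i - Q j‖ ^ 2) = C
  have iInf_add_const (i : Fin n) :
      ⨅ j, (‖P i - Q j‖ ^ 2 + C) = (⨅ j, ‖P i - Q j‖ ^ 2) + C :=
    (ciInf_add (Set.finite_range _).bddBelow C).symm
  have hn : (n : ℝ) ≠ 0 := NeZero.ne _
  simp only [iInf_add_const, Finset.sum_add_distrib, Finset.sum_const, Finset.card_univ,
    Fintype.card_fin, nsmul_eq_mul]
  field_simp

theorem dEMD_nonneg (P Q : Fin n → E) : 0 ≤ dEMD P Q :=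
  Real.iInf_nonneg fun _ => Finset.sum_nonneg fun _ _ => norm_nonneg _

theorem dEMD_comm (P Q : Fin n → E) : dEMD P Q = dEMD Q P := by
  refine (Equiv.inv (Equiv.Perm (Fin n))).iInf_congr fun σ => ?_
  calc ∑ i, ‖Q i - P (σ.symm i)‖ = ∑ i, ‖Q (σ i) - P (σ.symm (σ i))‖ :=
        (Equiv.sum_comp σ fun i => ‖Q i - P (σ.symm i)‖).symm
    _ = ∑ i, ‖P i - Q (σ i)‖ := by simp only [Equiv.symm_apply_apply, norm_sub_rev]

theorem exists_perm_sum_norm_sub_eq_dEMD (P Q : Fin n → E) :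
    ∃ σ : Equiv.Perm (Fin n), ∑ i, ‖P i - Q (σ i)‖ = dEMD P Q :=
  exists_eq_ciInf_of_finite

theorem sum_iInf_norm_sub_sq_le_mul_dEMD {P Q : Fin n → E} {K : ℝ}
    (hK : ∀ i j, ‖P i - Q j‖ ≤ K) : ∑ i, ⨅ j, ‖P i - Q j‖ ^ 2 ≤ K * dEMD P Q := by
  obtain ⟨σ, hσ⟩ := exists_perm_sum_norm_sub_eq_dEMD P Q
  rw [← hσ]
  exact sum_iInf_sq_le_mul_sum (fun _ => norm_nonneg _) fun i => hK i (σ i)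

theorem chamfer_le_two_K_mul_emd_general [NeZero n] {P Q : Fin n → E} {K : ℝ}
    (hK : ∀ i j, ‖P i - Q j‖ ≤ K) : dCD P Q ≤ 2 * K / n * dEMD P Q := by
  have sum_P_le : ∑ i, ⨅ j, ‖P i - Q j‖ ^ 2 ≤ K * dEMD P Q := sum_iInf_norm_sub_sq_le_mul_dEMD hK
  have sum_Q_le : ∑ j, ⨅ i, ‖P i - Q j‖ ^ 2 ≤ K * dEMD P Q := by
    rw [dEMD_comm]
    simpa only [norm_sub_rev] using
      sum_iInf_norm_sub_sq_le_mul_dEMD fun j i => (norm_sub_rev (Q j) (P i)).trans_le (hK i j)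
  calc dCD P Q = 1 / n * ∑ i, (⨅ j, ‖P i - Q j‖ ^ 2) + 1 / n * ∑ j, (⨅ i, ‖P i - Q j‖ ^ 2) :=
        dCD_eq_add P Q
    _ ≤ 1 / n * (K * dEMD P Q) + 1 / n * (K * dEMD P Q) := by gcongr
    _ = 2 * K / n * dEMD P Q := by ring

end PointClouds

theorem chamfer_le_two_K_mul_emd
    {E : Type*} [NormedAddCommGroup E] [InnerProductSpace ℝ E]
    {n : ℕ} (hn : 1 ≤ n) (P Q : Fin n → E) (K : ℝ)
    (hK : ∀ u ∈ Set.range P ∪ Set.range Q, ∀ v ∈ Set.range P ∪ Set.range Q,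
      ‖u - v‖ ≤ K) :
    dCD P Q ≤ 2 * K * dEMD P Q := by
  have : NeZero n := ⟨Nat.one_le_iff_ne_zero.1 hn⟩
  have hPQ (i j : Fin n) : ‖P i - Q j‖ ≤ K := hK _ (.inl ⟨i, rfl⟩) _ (.inr ⟨j, rfl⟩)
  have hK₀ : 0 ≤ K := (norm_nonneg _).trans (hPQ 0 0)
  calc dCD P Q ≤ 2 * K / n * dEMD P Q := chamfer_le_two_K_mul_emd_general hPQ
    _ ≤ 2 * K * dEMD P Q :=
      mul_le_mul_of_nonneg_right (div_le_self (by positivity) (mod_cast hn)) (dEMD_nonneg P Q)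
end

section
/- Let n ≥ 1 and let P, Q : Fin n → E be two point clouds of equal size n in a Euclidean space E such that ‖u − v‖ ≤ K for all points u, v drawn from the ranges of P and Q. Then the sharper bound d_CD(P, Q) ≤ (2K/n) · d_EMD(P, Q) holds (this is what the proof of Lemma 1 of the paper actually yields before discarding the factor 1/n). -/
open scoped BigOperators

/- Matching each point with its partner in an optimal bijection bounds every nearest-point distance,
and one factor of each squared distance is at most `K`. Since the bijection can be inverted, this
applies to both directions of the Chamfer discrepancy. -/

/-- The one-directional part of the Chamfer discrepancy: the mean squared distance from the points
of `P` to the cloud `Q`. It is `0` when either cloud is empty. -/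
noncomputable def directedChamfer {E : Type*} [NormedAddCommGroup E] {n m : ℕ}
    (P : Fin n → E) (Q : Fin m → E) : ℝ :=
  (1 / (n : ℝ)) * ∑ i, ⨅ j, ‖P i - Q j‖ ^ 2

section PointClouds

variable {E : Type*} [NormedAddCommGroup E] {n m : ℕ}

-- In `dCD` the first `⨅ j` extends over the whole second summand, which has to be pulled out of it.
theorem dCD_eq_directedChamfer_add_directedChamfer [NeZero n] [NeZero m]
    (P : Fin n → E) (Q : Fin m → E) :
    dCD P Q = directedChamfer P Q + directedChamfer Q P := by
  have iInf_add_const (f : Fin m → ℝ) (c : ℝ) : ⨅ j, (f j + c) = (⨅ j, f j) + c :=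
    (ciInf_add (Set.finite_range f).bddBelow c).symm
  have hn : (n : ℝ) ≠ 0 := NeZero.ne _
  simp only [dCD, directedChamfer, iInf_add_const, norm_sub_rev (Q _), Finset.sum_add_distrib,
    Finset.sum_const, Finset.card_univ, Fintype.card_fin, nsmul_eq_mul, mul_add]
  rw [← mul_assoc (1 / (n : ℝ)) n, one_div_mul_cancel hn, one_mul]

theorem directedChamfer_le_div_mul_sum (P : Fin n → E) (Q : Fin m → E) (f : Fin n → Fin m) {K : ℝ}
    (hK : ∀ i, ‖P i - Q (f i)‖ ≤ K) :
    directedChamfer P Q ≤ K / n * ∑ i, ‖P i - Q (f i)‖ := by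
  have iInf_sq_le (i : Fin n) : ⨅ j, ‖P i - Q j‖ ^ 2 ≤ K * ‖P i - Q (f i)‖ :=
    calc
      ⨅ j, ‖P i - Q j‖ ^ 2 ≤ ‖P i - Q (f i)‖ ^ 2 :=
        ciInf_le (Set.finite_range _).bddBelow (f i)
      _ = ‖P i - Q (f i)‖ * ‖P i - Q (f i)‖ := sq _
      _ ≤ K * ‖P i - Q (f i)‖ := by gcongr; exact hK i
  calc
    directedChamfer P Q ≤ 1 / n * ∑ i, K * ‖P i - Q (f i)‖ := by
      unfold directedChamfer
      gcongr with i
      exact iInf_sq_le i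
    _ = K / n * ∑ i, ‖P i - Q (f i)‖ := by rw [← Finset.mul_sum]; ring

theorem exists_perm_dEMD_eq_sum (P Q : Fin n → E) :
    ∃ σ : Equiv.Perm (Fin n), dEMD P Q = ∑ i, ‖P i - Q (σ i)‖ := by
  obtain ⟨σ, hσ⟩ := exists_eq_ciInf_of_finite
    (f := fun σ : Equiv.Perm (Fin n) => ∑ i, ‖P i - Q (σ i)‖)
  exact ⟨σ, hσ.symm⟩

theorem directedChamfer_le_div_mul_dEMD (P Q : Fin n → E) {K : ℝ}
    (hK : ∀ i j, ‖P i - Q j‖ ≤ K) :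
    directedChamfer P Q ≤ K / n * dEMD P Q := by
  obtain ⟨σ, hσ⟩ := exists_perm_dEMD_eq_sum P Q
  rw [hσ]
  exact directedChamfer_le_div_mul_sum P Q σ fun i => hK i (σ i)

theorem chamfer_le_two_K_div_n_mul_emd_general [NeZero n] (P Q : Fin n → E) {K : ℝ}
    (hK : ∀ i j, ‖P i - Q j‖ ≤ K) :
    dCD P Q ≤ 2 * K / n * dEMD P Q := by
  have hK_symm : ∀ j i, ‖Q j - P i‖ ≤ K := fun j i => norm_sub_rev (P i) (Q j) ▸ hK i j
  calc
    dCD P Q = directedChamfer P Q + directedChamfer Q P :=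
      dCD_eq_directedChamfer_add_directedChamfer P Q
    _ ≤ K / n * dEMD P Q + K / n * dEMD Q P :=
      add_le_add (directedChamfer_le_div_mul_dEMD P Q hK)
        (directedChamfer_le_div_mul_dEMD Q P hK_symm)
    _ = 2 * K / n * dEMD P Q := by rw [dEMD_comm Q P]; ring

end PointClouds

theorem chamfer_le_two_K_div_n_mul_emd
    {E : Type*} [NormedAddCommGroup E] [InnerProductSpace ℝ E]
    {n : ℕ} (hn : 1 ≤ n) (P Q : Fin n → E) (K : ℝ)
    (hK : ∀ u ∈ Set.range P ∪ Set.range Q, ∀ v ∈ Set.range P ∪ Set.range Q,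
      ‖u - v‖ ≤ K) :
    dCD P Q ≤ 2 * K / (n : ℝ) * dEMD P Q := by
  have : NeZero n := .of_pos hn
  exact chamfer_le_two_K_div_n_mul_emd_general P Q fun i j => hK _ (.inl ⟨i, rfl⟩) _ (.inr ⟨j, rfl⟩)
end
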